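/- For every x with 0 < x < 1, arcsl'(x)/v'(x) = 1/(8·h(x⁴)), where v(x) = x·Φ(x⁴, 3/2, 1/4), arcsl'(x) = 1/√(1 − x⁴), and h(s) = √(1 − s)·∑_{k=0}^∞ s^k/√(4k + 1); consequently, since h is strictly decreasing on (0, 1), the quotient arcsl'/v' is strictly increasing on (0, 1). -/

import Mathlib

/-- The arc lemniscate sine function: `arcsl x = ∫₀ˣ dt / √(1 - t⁴)`. -/
noncomputable def arcsl (x : ℝ) : ℝ := ∫ t in (0:ℝ)..x, 1 / Real.sqrt (1 - t ^ 4)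

/-- The Lerch zeta function: `Φ(z, s, a) = ∑ₖ zᵏ / (k + a)ˢ`. -/
noncomputable def lerchPhi (z s a : ℝ) : ℝ := ∑' k : ℕ, z ^ k / ((k : ℝ) + a) ^ s

/-- The function `v x = x · Φ(x⁴, 3/2, 1/4)`. -/
noncomputable def vFun (x : ℝ) : ℝ := x * lerchPhi (x ^ 4) (3 / 2) (1 / 4)

/-- The function `h s = √(1 - s) · ∑ₖ sᵏ / √(4k + 1)`. -/
noncomputable def hFun (s : ℝ) : ℝ :=
  Real.sqrt (1 - s) * ∑' k : ℕ, s ^ k / Real.sqrt (4 * (k : ℝ) + 1)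

/-!
The Euler operator lowers the exponent of the Lerch function,
`(z d/dz + a) Φ(z, s + 1, a) = Φ(z, s, a)`, so `v' x = 4 Φ(x⁴, 1/2, 1/4)`, while
`h s = √(1 - s) Φ(s, 1/2, 1/4) / 2`; this gives the formula for the quotient.

For the monotonicity of `h`, let `F s = ∑ₖ aₖ sᵏ`. The sign of the derivative of `(1 - s)ᵖ F s` is
that of `(1 - s) F' s - p F s`, whose `k`-th coefficient is `(k + 1) aₖ₊₁ - (k + p) aₖ`. For
`aₖ = 1 / √(k + a)` and `p = 1/2` these coefficients are all negative as soon as `a ≤ 1/4`.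
-/

open Asymptotics Filter Set

theorem abs_pow_lt_one {x : ℝ} (hx : |x| < 1) {m : ℕ} (hm : m ≠ 0) : |x ^ m| < 1 := by
  simpa only [abs_pow] using pow_lt_one₀ (abs_nonneg x) hx hm

section PowerSeries

variable {𝕜 : Type*} [RCLike 𝕜] {a : ℕ → 𝕜} {r s : 𝕜}

theorem summable_succ_mul_coeff_succ_mul_pow (ha : Summable fun k ↦ a k * r ^ k)
    (hs : ‖s‖ < ‖r‖) : Summable fun k : ℕ ↦ (k + 1) * a (k + 1) * s ^ k := by
  have hr : r ≠ 0 := norm_pos_iff.mp ((norm_nonneg s).trans_lt hs)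
  have hq : ‖s / r‖ < 1 := by rwa [norm_div, div_lt_one (norm_pos_iff.mpr hr)]
  have hgeom : Summable fun k : ℕ ↦ ‖((k : 𝕜) + 1) * (s / r) ^ k‖ := by
    simpa using (summable_choose_mul_geometric_of_norm_lt_one 1 hq).norm
  have hbdd : (fun k ↦ a (k + 1) * r ^ (k + 1) * r⁻¹) =O[atTop] fun _ ↦ (1 : ℝ) :=
    (((summable_nat_add_iff 1).mpr ha).mul_right r⁻¹).tendsto_atTop_zero.isBigO_one ℝ
  refine summable_of_isBigO_nat hgeom ((hbdd.mul (isBigO_refl _ _).norm_right).congr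
    (fun k ↦ ?_) fun k ↦ one_mul _)
  rw [div_pow, pow_succ]
  field_simp

theorem hasSum_natCast_mul_coeff_mul_pow (ha : Summable fun k ↦ a k * r ^ k) (hs : ‖s‖ < ‖r‖) :
    HasSum (fun k : ℕ ↦ k * a k * s ^ k) (s * ∑' k : ℕ, (k + 1) * a (k + 1) * s ^ k) := by
  rw [← hasSum_nat_add_iff' 1]
  simp only [Finset.sum_range_one, Nat.cast_zero, zero_mul, sub_zero, Nat.cast_add_one]
  refine ((summable_succ_mul_coeff_succ_mul_pow ha hs).hasSum.mul_left s).congr_fun fun k ↦ ?_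
  ring

theorem summable_natCast_mul_coeff_mul_pow_sub_one (ha : Summable fun k ↦ a k * r ^ k)
    (hs : ‖s‖ < ‖r‖) : Summable fun k : ℕ ↦ k * a k * s ^ (k - 1) :=
  (summable_nat_add_iff 1).mp <| by simpa using summable_succ_mul_coeff_succ_mul_pow ha hs

theorem hasDerivAt_tsum_mul_pow (ha : Summable fun k ↦ a k * r ^ k) (hs : ‖s‖ < ‖r‖) :
    HasDerivAt (fun z ↦ ∑' k, a k * z ^ k) (∑' k : ℕ, (k + 1) * a (k + 1) * s ^ k) s := by
  obtain ⟨ρ, hsρ, hρr⟩ := exists_between hs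
  have hρ : 0 ≤ ρ := (norm_nonneg s).trans hsρ.le
  have hρ' : ‖(ρ : 𝕜)‖ = ρ := RCLike.norm_of_nonneg hρ
  have hmajor : Summable fun k : ℕ ↦ ‖(k : 𝕜) * a k * (ρ : 𝕜) ^ (k - 1)‖ :=
    (summable_natCast_mul_coeff_mul_pow_sub_one ha (hρ'.trans_lt hρr)).norm
  have hderiv := hasDerivAt_tsum_of_isPreconnected (g := fun k z ↦ a k * z ^ k)
    (g' := fun k z ↦ k * a k * z ^ (k - 1)) (y₀ := 0) (y := s) hmajor Metric.isOpen_ball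
    (convex_ball (0 : 𝕜) ρ).isPreconnected
    (fun k z _ ↦ ((hasDerivAt_pow k z).const_mul (a k)).congr_deriv (by ring))
    (fun k z hz ↦ ?_) (Metric.mem_ball_self ((norm_nonneg s).trans_lt hsρ)) ?_
    (mem_ball_zero_iff.mpr hsρ)
  · refine hderiv.congr_deriv ?_
    simp [(summable_natCast_mul_coeff_mul_pow_sub_one ha hs).tsum_eq_zero_add]
  · rw [norm_mul, norm_mul _ ((ρ : 𝕜) ^ _), norm_pow, norm_pow, hρ']
    gcongr
    exact (mem_ball_zero_iff.mp hz).le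
  · exact summable_of_ne_finset_zero (s := {0}) fun k hk ↦ by
      rw [zero_pow (by simpa using hk), mul_zero]

end PowerSeries

section Monotonicity

variable {a : ℕ → ℝ} {p : ℝ} {n : ℕ}

theorem one_sub_mul_tsum_succ_mul_coeff_lt {r s : ℝ} (ha : Summable fun k ↦ a k * r ^ k)
    (hs : 0 < s) (hsr : s < r) (hle : ∀ k : ℕ, (k + 1) * a (k + 1) ≤ (k + p) * a k)
    (hlt : (n + 1) * a (n + 1) < (n + p) * a n) :
    (1 - s) * ∑' k : ℕ, (k + 1) * a (k + 1) * s ^ k < p * ∑' k, a k * s ^ k := by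
  have hnorm : ‖s‖ < ‖r‖ := by
    rwa [Real.norm_of_nonneg hs.le, Real.norm_of_nonneg (hs.trans hsr).le]
  have hsum : Summable fun k ↦ a k * s ^ k :=
    summable_powerSeries_of_norm_lt ha.hasSum.tendsto_sum_nat.cauchySeq hnorm
  have hrhs := (hasSum_natCast_mul_coeff_mul_pow ha hnorm).add (hsum.hasSum.mul_left p)
  have hterm (k : ℕ) : k * a k * s ^ k + p * (a k * s ^ k) = (k + p) * a k * s ^ k := by ring
  simp only [hterm] at hrhs
  have hcoeff : ∑' k : ℕ, (k + 1) * a (k + 1) * s ^ k <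
      s * (∑' k : ℕ, (k + 1) * a (k + 1) * s ^ k) + p * ∑' k, a k * s ^ k :=
    hasSum_lt (fun k ↦ mul_le_mul_of_nonneg_right (hle k) (pow_nonneg hs.le k))
      (mul_lt_mul_of_pos_right hlt (pow_pos hs n))
      (summable_succ_mul_coeff_succ_mul_pow ha hnorm).hasSum hrhs
  linarith

theorem strictAntiOn_one_sub_rpow_mul_tsum
    (ha : ∀ r ∈ Ioo (0 : ℝ) 1, Summable fun k ↦ a k * r ^ k)
    (hle : ∀ k : ℕ, (k + 1) * a (k + 1) ≤ (k + p) * a k)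
    (hlt : (n + 1) * a (n + 1) < (n + p) * a n) :
    StrictAntiOn (fun s ↦ (1 - s) ^ p * ∑' k, a k * s ^ k) (Ico 0 1) := by
  have hderiv : ∀ s ∈ Ico (0 : ℝ) 1, HasDerivAt (fun s ↦ (1 - s) ^ p * ∑' k, a k * s ^ k)
      ((1 - s) ^ (p - 1) *
        ((1 - s) * ∑' k : ℕ, (k + 1) * a (k + 1) * s ^ k - p * ∑' k, a k * s ^ k)) s := by
    intro s hs
    obtain ⟨r, hsr, hr⟩ := exists_between hs.2
    have hr₀ : 0 < r := hs.1.trans_lt hsr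
    have hnorm : ‖s‖ < ‖r‖ := by rwa [Real.norm_of_nonneg hs.1, Real.norm_of_nonneg hr₀.le]
    have hpos : 0 < 1 - s := sub_pos.mpr hs.2
    have hrpow : (1 - s) ^ p = (1 - s) ^ (p - 1) * (1 - s) := by
      rw [← Real.rpow_add_one hpos.ne', sub_add_cancel]
    refine ((((hasDerivAt_id s).const_sub 1).rpow_const (.inl hpos.ne')).mul
      (hasDerivAt_tsum_mul_pow (ha r ⟨hr₀, hr⟩) hnorm)).congr_deriv ?_
    simp only [id, hrpow]
    ring
  refine strictAntiOn_of_deriv_neg (convex_Ico 0 1)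
    (fun s hs ↦ (hderiv s hs).continuousAt.continuousWithinAt) fun s hs ↦ ?_
  rw [interior_Ico] at hs
  obtain ⟨r, hsr, hr⟩ := exists_between hs.2
  rw [(hderiv s (Ioo_subset_Ico_self hs)).deriv]
  exact mul_neg_of_pos_of_neg (Real.rpow_pos_of_pos (sub_pos.mpr hs.2) _) <| sub_neg.mpr <|
    one_sub_mul_tsum_succ_mul_coeff_lt (ha r ⟨hs.1.trans hsr, hr⟩) hs.1 hsr hle hlt

end Monotonicity

section Lerch

variable {z a : ℝ}

theorem isBigO_inv_natCast_add_rpow (s a : ℝ) :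
    (fun k : ℕ ↦ (((k : ℝ) + a) ^ s)⁻¹) =O[atTop] fun k : ℕ ↦ (k : ℝ) ^ ⌈-s⌉₊ := by
  have hlin : (fun k : ℕ ↦ (k : ℝ) + a) =O[atTop] fun k : ℕ ↦ (k : ℝ) :=
    (isBigO_refl _ _).add (isLittleO_const_id_atTop a |>.comp_tendsto
      tendsto_natCast_atTop_atTop).isBigO
  refine IsBigO.trans (.of_bound 1 ?_) (hlin.pow ⌈-s⌉₊)
  filter_upwards [(tendsto_natCast_atTop_atTop (R := ℝ)).eventually_ge_atTop (1 - a)] with k hk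
  have hbase : 1 ≤ (k : ℝ) + a := by linarith
  have hpos : 0 < (k : ℝ) + a := one_pos.trans_le hbase
  rw [one_mul, ← Real.rpow_neg hpos.le, Real.norm_of_nonneg (by positivity),
    Real.norm_of_nonneg (by positivity), ← Real.rpow_natCast]
  exact Real.rpow_le_rpow_of_exponent_le hbase (Nat.le_ceil _)

theorem summable_lerchPhi (hz : |z| < 1) (s a : ℝ) :
    Summable fun k : ℕ ↦ (((k : ℝ) + a) ^ s)⁻¹ * z ^ k :=
  summable_of_isBigO_nat (summable_pow_mul_geometric_of_norm_lt_one _ hz)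
    ((isBigO_inv_natCast_add_rpow s a).mul (isBigO_refl _ _))

theorem lerchPhi_eq_tsum_inv_mul_pow (z s a : ℝ) :
    lerchPhi z s a = ∑' k : ℕ, (((k : ℝ) + a) ^ s)⁻¹ * z ^ k := by
  simp only [lerchPhi, div_eq_inv_mul]

theorem lerchPhi_pos (hz₀ : 0 ≤ z) (hz₁ : z < 1) (s : ℝ) (ha : 0 < a) : 0 < lerchPhi z s a := by
  rw [lerchPhi_eq_tsum_inv_mul_pow]
  refine (summable_lerchPhi (abs_lt.mpr ⟨by linarith, hz₁⟩) s a).tsum_pos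
    (fun k ↦ by positivity) 0 ?_
  rw [pow_zero, mul_one]
  positivity

theorem differentiableAt_lerchPhi (hz : |z| < 1) (s a : ℝ) :
    DifferentiableAt ℝ (fun w ↦ lerchPhi w s a) z := by
  obtain ⟨r, hzr, hr⟩ := exists_between hz
  have hr' : |r| = r := abs_of_pos ((abs_nonneg z).trans_lt hzr)
  simp only [lerchPhi_eq_tsum_inv_mul_pow]
  exact (hasDerivAt_tsum_mul_pow (summable_lerchPhi (hr'.trans_lt hr) s a)
    (hzr.trans_eq hr'.symm)).differentiableAt

theorem mul_deriv_lerchPhi_add (hz : |z| < 1) (s : ℝ) (ha : 0 < a) :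
    z * deriv (fun w ↦ lerchPhi w (s + 1) a) z + a * lerchPhi z (s + 1) a = lerchPhi z s a := by
  obtain ⟨r, hzr, hr⟩ := exists_between hz
  have hr' : |r| = r := abs_of_pos ((abs_nonneg z).trans_lt hzr)
  have hsum := summable_lerchPhi (hr'.trans_lt hr) (s + 1) a
  have hnorm : ‖z‖ < ‖r‖ := hzr.trans_eq hr'.symm
  simp only [lerchPhi_eq_tsum_inv_mul_pow]
  rw [(hasDerivAt_tsum_mul_pow hsum hnorm).deriv]
  refine (((hasSum_natCast_mul_coeff_mul_pow hsum hnorm).add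
    ((summable_lerchPhi hz (s + 1) a).hasSum.mul_left a)).tsum_eq.symm).trans
    (tsum_congr fun k ↦ ?_)
  have hk : 0 < (k : ℝ) + a := by positivity
  rw [Real.rpow_add_one hk.ne']
  field_simp

theorem hasDerivAt_mul_lerchPhi_pow {m : ℕ} (hm : m ≠ 0) {x : ℝ} (hx : |x| < 1) (s : ℝ) :
    HasDerivAt (fun y ↦ y * lerchPhi (y ^ m) (s + 1) (1 / m)) (m * lerchPhi (x ^ m) s (1 / m))
      x := by
  have hxm : |x ^ m| < 1 := abs_pow_lt_one hx hm
  have hcomp : HasDerivAt (fun y ↦ lerchPhi (y ^ m) (s + 1) (1 / m))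
      (deriv (fun w ↦ lerchPhi w (s + 1) (1 / m)) (x ^ m) * (m * x ^ (m - 1))) x :=
    (differentiableAt_lerchPhi hxm (s + 1) (1 / m)).hasDerivAt.comp (h := (· ^ m)) x
      (hasDerivAt_pow m x)
  refine ((hasDerivAt_id x).mul hcomp).congr_deriv ?_
  rw [← mul_deriv_lerchPhi_add hxm s (by positivity), ← mul_pow_sub_one hm x, id]
  field_simp
  ring

theorem succ_mul_inv_sqrt_lt (ha : 0 < a) (ha' : a ≤ 1 / 4) (k : ℕ) :
    (k + 1) * (√((k + 1 : ℕ) + a))⁻¹ < (k + 1 / 2) * (√(k + a))⁻¹ := by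
  rw [← div_eq_mul_inv, ← div_eq_mul_inv, div_lt_div_iff₀ (by positivity) (by positivity)]
  refine lt_of_pow_lt_pow_left₀ 2 (by positivity) ?_
  rw [mul_pow, mul_pow, Real.sq_sqrt (by positivity), Real.sq_sqrt (by positivity)]
  push_cast
  nlinarith [k.cast_nonneg (α := ℝ)]

theorem strictAntiOn_sqrt_one_sub_mul_lerchPhi (ha : 0 < a) (ha' : a ≤ 1 / 4) :
    StrictAntiOn (fun z ↦ √(1 - z) * lerchPhi z (1 / 2) a) (Ico 0 1) := by
  simp only [lerchPhi_eq_tsum_inv_mul_pow, Real.sqrt_eq_rpow (1 - _)]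
  have hcoeff (k : ℕ) : (k + 1) * ((((k + 1 : ℕ) : ℝ) + a) ^ (1 / 2 : ℝ))⁻¹ <
      (k + 1 / 2) * (((k : ℝ) + a) ^ (1 / 2 : ℝ))⁻¹ := by
    simpa only [Real.sqrt_eq_rpow] using succ_mul_inv_sqrt_lt ha ha' k
  exact strictAntiOn_one_sub_rpow_mul_tsum
    (fun r hr ↦ summable_lerchPhi ((abs_of_pos hr.1).trans_lt hr.2) _ _)
    (fun k ↦ (hcoeff k).le) (hcoeff 0)

end Lerch

section Quotient

variable {x : ℝ}

theorem hasDerivAt_arcsl (hx : x ∈ Ioo (-1) 1) : HasDerivAt arcsl (1 / √(1 - x ^ 4)) x := by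
  have hpos : ∀ t ∈ Ioo (-1 : ℝ) 1, 0 < 1 - t ^ 4 := fun t ht ↦
    sub_pos.mpr (abs_lt.mp (abs_pow_lt_one (abs_lt.mpr ht) four_ne_zero)).2
  have hcont : ContinuousOn (fun t : ℝ ↦ 1 / √(1 - t ^ 4)) (Ioo (-1) 1) :=
    continuousOn_const.div (by fun_prop) fun t ht ↦ (Real.sqrt_pos.mpr (hpos t ht)).ne'
  have hsub : uIcc 0 x ⊆ Ioo (-1) 1 := ordConnected_Ioo.uIcc_subset (by norm_num) hx
  exact intervalIntegral.integral_hasDerivAt_right (hcont.mono hsub).intervalIntegrable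
    (hcont.stronglyMeasurableAtFilter isOpen_Ioo x hx) (hcont.continuousAt (isOpen_Ioo.mem_nhds hx))

theorem hasDerivAt_vFun (hx : |x| < 1) :
    HasDerivAt vFun (4 * lerchPhi (x ^ 4) (1 / 2) (1 / 4)) x := by
  have h := hasDerivAt_mul_lerchPhi_pow four_ne_zero hx (1 / 2)
  rwa [Nat.cast_ofNat, show (1 / 2 + 1 : ℝ) = 3 / 2 by norm_num] at h

theorem hFun_eq_sqrt_mul_lerchPhi (s : ℝ) :
    hFun s = √(1 - s) * lerchPhi s (1 / 2) (1 / 4) / 2 := by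
  have hsqrt (k : ℕ) : √(4 * (k : ℝ) + 1) = 2 * √(k + 1 / 4) := by
    rw [show 4 * (k : ℝ) + 1 = 2 ^ 2 * (k + 1 / 4) by ring, Real.sqrt_mul (by norm_num),
      Real.sqrt_sq zero_le_two]
  rw [hFun, lerchPhi, mul_div_assoc, ← tsum_div_const]
  simp only [hsqrt, div_div, Real.sqrt_eq_rpow (_ + 1 / 4), mul_comm (2 : ℝ)]

theorem strictAntiOn_hFun : StrictAntiOn hFun (Ico 0 1) := by
  intro s hs t ht hst
  have h := strictAntiOn_sqrt_one_sub_mul_lerchPhi (a := 1 / 4) (by norm_num) le_rfl hs ht hst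
  simp only [hFun_eq_sqrt_mul_lerchPhi]
  exact div_lt_div_of_pos_right h two_pos

theorem hFun_pos {s : ℝ} (hs : s ∈ Ico 0 1) : 0 < hFun s := by
  rw [hFun_eq_sqrt_mul_lerchPhi]
  have hsqrt : 0 < √(1 - s) := Real.sqrt_pos.mpr (sub_pos.mpr hs.2)
  have hlerch := lerchPhi_pos hs.1 hs.2 (1 / 2) (a := 1 / 4) (by norm_num)
  positivity

theorem deriv_arcsl_div_deriv_vFun (hx : x ∈ Ioo (-1) 1) :
    deriv arcsl x / deriv vFun x = 1 / (8 * hFun (x ^ 4)) := by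
  rw [(hasDerivAt_arcsl hx).deriv, (hasDerivAt_vFun (abs_lt.mpr hx)).deriv,
    hFun_eq_sqrt_mul_lerchPhi, div_div]
  congr 1
  ring

theorem strictMonoOn_deriv_arcsl_div_deriv_vFun :
    StrictMonoOn (fun x ↦ deriv arcsl x / deriv vFun x) (Ico 0 1) := by
  intro x hx y hy hxy
  have hmem {t : ℝ} (ht : t ∈ Ico 0 1) : t ^ 4 ∈ Ico (0 : ℝ) 1 :=
    ⟨pow_nonneg ht.1 4, pow_lt_one₀ ht.1 ht.2 four_ne_zero⟩
  have hsub : Ico (0 : ℝ) 1 ⊆ Ioo (-1) 1 := Ico_subset_Ioo_left (by norm_num)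
  have hanti : hFun (y ^ 4) < hFun (x ^ 4) :=
    strictAntiOn_hFun (hmem hx) (hmem hy) (pow_lt_pow_left₀ hxy hx.1 four_ne_zero)
  have hpos : 0 < hFun (y ^ 4) := hFun_pos (hmem hy)
  simp only [deriv_arcsl_div_deriv_vFun (hsub hx), deriv_arcsl_div_deriv_vFun (hsub hy)]
  gcongr

end Quotient

theorem deriv_ratio_eq_and_strictMono_general :
    (∀ x ∈ Ioo (-1 : ℝ) 1,
        deriv arcsl x = 1 / √(1 - x ^ 4) ∧
        deriv arcsl x / deriv vFun x = 1 / (8 * hFun (x ^ 4))) ∧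
      StrictMonoOn (fun x ↦ deriv arcsl x / deriv vFun x) (Ico 0 1) :=
  ⟨fun _ hx ↦ ⟨(hasDerivAt_arcsl hx).deriv, deriv_arcsl_div_deriv_vFun hx⟩,
    strictMonoOn_deriv_arcsl_div_deriv_vFun⟩

theorem deriv_ratio_eq_and_strictMono :
    (∀ x : ℝ, 0 < x → x < 1 →
        deriv arcsl x = 1 / Real.sqrt (1 - x ^ 4) ∧
        deriv arcsl x / deriv vFun x = 1 / (8 * hFun (x ^ 4))) ∧
      StrictMonoOn (fun x => deriv arcsl x / deriv vFun x) (Set.Ioo (0 : ℝ) 1) :=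
  ⟨fun x h₀ h₁ ↦ deriv_ratio_eq_and_strictMono_general.1 x ⟨by linarith, h₁⟩,
    deriv_ratio_eq_and_strictMono_general.2.mono Ioo_subset_Ico_self⟩
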